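/- arXiv:1905.08781 — 3 statements merged into one kernel-verified Lean document; each statement's English description precedes it below -/
import Mathlib

section
/- The pointwise limit hlow* := lim_{n→∞} hlow^n (which exists in [0,+∞] since the sequence is nondecreasing) is the minimal nonnegative solution of the lower hitting-time system: hlow* satisfies hlow* = 1_{A^c} + 1_{A^c}·(L hlow*), and every function g : X → [0,+∞] satisfying g = 1_{A^c} + 1_{A^c}·(L g) dominates hlow* pointwise. -/
open Filter Topology

variable {X : Type*}

/-- The application of a transition "matrix" `T` to an extended-real-valued
function `f`, `(Tf)(x) = ∑ y, T x y * f y`, with the convention `0 * ⊤ = 0`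
(which is the convention of `EReal` multiplication). -/
noncomputable def matApply [Fintype X] (T : X → X → ℝ) (f : X → EReal) (x : X) : EReal :=
  ∑ y, (T x y : EReal) * f y

/-- `T` is a transition matrix: nonnegative entries, rows summing to one. -/
def IsTransMat [Fintype X] (T : X → X → ℝ) : Prop :=
  (∀ x y, 0 ≤ T x y) ∧ ∀ x, ∑ y, T x y = 1

/-- `𝒯` has separately specified rows. -/
def HasSepRows [Fintype X] (𝒯 : Set (X → X → ℝ)) : Prop :=
  ∀ sel : X → X → X → ℝ, (∀ x, sel x ∈ 𝒯) → ∃ T ∈ 𝒯, ∀ x y, T x y = sel x x y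

/-- The lower transition operator of `𝒯`. -/
noncomputable def lowerOp [Fintype X] (𝒯 : Set (X → X → ℝ)) (f : X → EReal) (x : X) : EReal :=
  ⨅ T ∈ 𝒯, matApply T f x

/-- The upper transition operator of `𝒯`. -/
noncomputable def upperOp [Fintype X] (𝒯 : Set (X → X → ℝ)) (f : X → EReal) (x : X) : EReal :=
  ⨆ T ∈ 𝒯, matApply T f x

/-- The `{0,1}`-indicator of a set `B ⊆ X`, as an extended-real-valued function. -/
noncomputable def indE (B : Set X) : X → EReal := fun x => Set.indicator B 1 x

/-- The lower hitting-time iterates: `hlow⁰ = 1_{Aᶜ}`,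
`hlowⁿ⁺¹ = 1_{Aᶜ} + 1_{Aᶜ} · (L hlowⁿ)`. -/
noncomputable def hlowIter [Fintype X] (𝒯 : Set (X → X → ℝ)) (A : Set X) : ℕ → X → EReal
  | 0 => indE Aᶜ
  | n + 1 => fun x => indE Aᶜ x + indE Aᶜ x * lowerOp 𝒯 (hlowIter 𝒯 A n) x

/-- The upper hitting-time iterates: `hup⁰ = 1_{Aᶜ}`,
`hupⁿ⁺¹ = 1_{Aᶜ} + 1_{Aᶜ} · (U hupⁿ)`. -/
noncomputable def hupIter [Fintype X] (𝒯 : Set (X → X → ℝ)) (A : Set X) : ℕ → X → EReal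
  | 0 => indE Aᶜ
  | n + 1 => fun x => indE Aᶜ x + indE Aᶜ x * upperOp 𝒯 (hupIter 𝒯 A n) x

/- Restricted to nonnegative functions, the system is a fixed-point equation `f = Φ f` for a
monotone map `Φ` of the complete lattice `X → [0, ∞]`, and the `n`-th iterate is `Φⁿ⁺¹ 0`. By
Kleene's fixed-point theorem these converge to the least fixed point of `Φ` once `Φ` commutes with
suprema of increasing sequences. Each `T` does, so the point is to exchange `⨅ T ∈ 𝒯` with the
supremum: this is a one-sided Dini argument, as `𝒯` is compact and `T ↦ T f x` is lower
semicontinuous (even where `f` is infinite, because `0 * ∞ = 0`). -/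

section Development

open scoped ENNReal
open OmegaCompletePartialOrder

lemma biInf_iSup_eq_iSup_biInf_of_isCompact {α β ι : Type*} [TopologicalSpace α]
    [CompleteLinearOrder β] [DenselyOrdered β] [Preorder ι] [IsDirectedOrder ι] [Nonempty ι]
    {K : Set α} (hK : IsCompact K) {F : ι → α → β} (hF : Monotone F)
    (hlsc : ∀ i, LowerSemicontinuousOn (F i) K) :
    ⨅ a ∈ K, ⨆ i, F i a = ⨆ i, ⨅ a ∈ K, F i a := by
  refine le_antisymm (le_of_forall_lt_imp_le_of_dense fun c hc ↦ ?_)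
    (iSup_le fun i ↦ iInf₂_mono fun a _ ↦ le_iSup (F · a) i)
  have exists_uniform : ∃ i, ∀ a ∈ K, c < F i a := by
    refine hK.induction_on (p := fun s ↦ ∃ i, ∀ a ∈ s, c < F i a) ?_ ?_ ?_ ?_
    · exact ⟨Classical.arbitrary ι, by simp⟩
    · rintro s t hst ⟨i, hi⟩
      exact ⟨i, fun a ha ↦ hi a (hst ha)⟩
    · rintro s t ⟨i, hi⟩ ⟨j, hj⟩
      obtain ⟨k, hik, hjk⟩ := exists_ge_ge i j
      exact ⟨k, fun a ha ↦ ha.elim (fun hs ↦ (hi a hs).trans_le (hF hik a))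
        fun ht ↦ (hj a ht).trans_le (hF hjk a)⟩
    · intro a ha
      obtain ⟨i, hi⟩ := lt_iSup_iff.1 (hc.trans_le (iInf₂_le a ha))
      exact ⟨_, hlsc i a ha c hi, i, fun _ hb ↦ hb⟩
  obtain ⟨i, hi⟩ := exists_uniform
  exact le_iSup_of_le i (le_iInf₂ fun a ha ↦ (hi a ha).le)

lemma tendsto_iterate_bot_lfp {α : Type*} [CompleteLattice α] [TopologicalSpace α]
    [SupConvergenceClass α] (f : α →o α) (hf : ωScottContinuous f) :
    Tendsto (fun n ↦ f^[n] ⊥) atTop (𝓝 f.lfp) := by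
  rw [fixedPoints.lfp_eq_sSup_iterate f hf]
  exact tendsto_atTop_iSup (f.monotone.monotone_iterate_of_le_map bot_le)

lemma lowerSemicontinuous_ennreal_mul_const (a : ℝ≥0∞) :
    LowerSemicontinuous fun t : ℝ≥0∞ ↦ t * a := by
  rcases eq_or_ne a ∞ with rfl | ha
  · simp only [← ENNReal.iSup_natCast, ENNReal.mul_iSup]
    exact lowerSemicontinuous_iSup fun n ↦
      (ENNReal.continuous_mul_const (ENNReal.natCast_ne_top n)).lowerSemicontinuous
  · exact (ENNReal.continuous_mul_const ha).lowerSemicontinuous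

lemma coe_ennreal_finsetSum {ι : Type*} (s : Finset ι) (f : ι → ℝ≥0∞) :
    ((∑ i ∈ s, f i : ℝ≥0∞) : EReal) = ∑ i ∈ s, (f i : EReal) :=
  map_sum (⟨⟨(↑), EReal.coe_ennreal_zero⟩, EReal.coe_ennreal_add⟩ : ℝ≥0∞ →+ EReal) f s

lemma coe_ennreal_iInf {ι : Sort*} (f : ι → ℝ≥0∞) :
    ((⨅ i, f i : ℝ≥0∞) : EReal) = ⨅ i, (f i : EReal) :=
  EReal.coe_ennreal_strictMono.monotone.map_iInf_of_continuousAt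
    continuous_coe_ennreal_ereal.continuousAt EReal.coe_ennreal_top

variable [Fintype X]

/-- The action of a real matrix on `[0, ∞]`-valued functions. It agrees with `matApply` when the
matrix is nonnegative; negative entries are replaced by `0`. -/
noncomputable def ennrealMatApply (T : X → X → ℝ) (f : X → ℝ≥0∞) (x : X) : ℝ≥0∞ :=
  ∑ y, ENNReal.ofReal (T x y) * f y

/-- The lower transition operator on `[0, ∞]`-valued functions, Scott continuous for compact `𝒯`. -/
noncomputable def ennrealLowerOp (𝒯 : Set (X → X → ℝ)) (f : X → ℝ≥0∞) (x : X) : ℝ≥0∞ :=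
  ⨅ T ∈ 𝒯, ennrealMatApply T f x

lemma matApply_coe_ennreal {T : X → X → ℝ} {x : X} (hT : ∀ y, 0 ≤ T x y) (f : X → ℝ≥0∞) :
    matApply T (fun y ↦ (f y : EReal)) x = ennrealMatApply T f x := by
  simp only [matApply, ennrealMatApply, coe_ennreal_finsetSum, EReal.coe_ennreal_mul,
    EReal.coe_ennreal_ofReal, max_eq_left (hT _)]

lemma lowerOp_coe_ennreal {𝒯 : Set (X → X → ℝ)} (hnonneg : ∀ T ∈ 𝒯, ∀ x y, 0 ≤ T x y)
    (f : X → ℝ≥0∞) (x : X) :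
    lowerOp 𝒯 (fun y ↦ (f y : EReal)) x = ennrealLowerOp 𝒯 f x := by
  simp only [lowerOp, ennrealLowerOp, coe_ennreal_iInf]
  exact iInf_congr fun T ↦ iInf_congr fun hT ↦ matApply_coe_ennreal (hnonneg T hT x) f

lemma lowerSemicontinuous_ennrealMatApply (f : X → ℝ≥0∞) (x : X) :
    LowerSemicontinuous fun T ↦ ennrealMatApply T f x :=
  lowerSemicontinuous_sum fun y _ ↦ (lowerSemicontinuous_ennreal_mul_const (f y)).comp
    (ENNReal.continuous_ofReal.comp (continuous_apply_apply x y))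

lemma ennrealMatApply_mono (T : X → X → ℝ) : Monotone (ennrealMatApply T) :=
  fun _ _ hfg _ ↦ Finset.sum_le_sum fun y _ ↦ mul_le_mul_right (hfg y) _

lemma ennrealMatApply_iSup {ι : Type*} [Preorder ι] [IsDirectedOrder ι] (T : X → X → ℝ)
    {f : ι → X → ℝ≥0∞} (hf : Monotone f) (x : X) :
    ennrealMatApply T (⨆ i, f i) x = ⨆ i, ennrealMatApply T (f i) x := by
  simp only [ennrealMatApply, iSup_apply, ENNReal.mul_iSup]
  exact ENNReal.finsetSum_iSup_of_monotone fun y _ _ hij ↦ mul_le_mul_right (hf hij y) _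

lemma ennrealLowerOp_mono (𝒯 : Set (X → X → ℝ)) : Monotone (ennrealLowerOp 𝒯) :=
  fun _ _ hfg x ↦ iInf₂_mono fun T _ ↦ ennrealMatApply_mono T hfg x

lemma ennrealLowerOp_bot {𝒯 : Set (X → X → ℝ)} (hne : 𝒯.Nonempty) : ennrealLowerOp 𝒯 ⊥ = ⊥ := by
  ext x
  simp [ennrealLowerOp, ennrealMatApply, biInf_const hne]

lemma ennrealLowerOp_iSup {ι : Type*} [Preorder ι] [IsDirectedOrder ι] [Nonempty ι]
    {𝒯 : Set (X → X → ℝ)} (hcpt : IsCompact 𝒯) {f : ι → X → ℝ≥0∞} (hf : Monotone f) :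
    ennrealLowerOp 𝒯 (⨆ i, f i) = ⨆ i, ennrealLowerOp 𝒯 (f i) := by
  ext x
  simp only [ennrealLowerOp, ennrealMatApply_iSup _ hf, iSup_apply]
  exact biInf_iSup_eq_iSup_biInf_of_isCompact hcpt
    (fun _ _ hij T ↦ ennrealMatApply_mono T (hf hij) x)
    fun i ↦ (lowerSemicontinuous_ennrealMatApply (f i) x).lowerSemicontinuousOn 𝒯

/-- The right-hand side `f ↦ 1_{Aᶜ} + 1_{Aᶜ} · L f` of the lower hitting-time system, as a monotone
self-map of the complete lattice `X → [0, ∞]`. -/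
noncomputable def lowerHittingStep (𝒯 : Set (X → X → ℝ)) (A : Set X) :
    (X → ℝ≥0∞) →o (X → ℝ≥0∞) where
  toFun f := Aᶜ.indicator (1 + ennrealLowerOp 𝒯 f)
  monotone' _ _ hfg :=
    fun _ ↦ Set.indicator_le_indicator (add_le_add_right (ennrealLowerOp_mono 𝒯 hfg _) 1)

lemma lowerHittingStep_of_mem (𝒯 : Set (X → X → ℝ)) {A : Set X} (f : X → ℝ≥0∞) {x : X}
    (hx : x ∈ A) : lowerHittingStep 𝒯 A f x = 0 :=
  Set.indicator_of_notMem (by simpa using hx) _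

lemma lowerHittingStep_of_notMem (𝒯 : Set (X → X → ℝ)) {A : Set X} (f : X → ℝ≥0∞) {x : X}
    (hx : x ∉ A) : lowerHittingStep 𝒯 A f x = 1 + ennrealLowerOp 𝒯 f x :=
  Set.indicator_of_mem (s := Aᶜ) hx _

lemma coe_lowerHittingStep {𝒯 : Set (X → X → ℝ)} (hnonneg : ∀ T ∈ 𝒯, ∀ x y, 0 ≤ T x y)
    (A : Set X) (f : X → ℝ≥0∞) (x : X) :
    (lowerHittingStep 𝒯 A f x : EReal)
      = indE Aᶜ x + indE Aᶜ x * lowerOp 𝒯 (fun y ↦ (f y : EReal)) x := by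
  rw [lowerOp_coe_ennreal hnonneg]
  by_cases hx : x ∈ A
  · simp [lowerHittingStep_of_mem, indE, hx]
  · simp [lowerHittingStep_of_notMem, indE, hx]

lemma scottContinuous_lowerHittingStep {𝒯 : Set (X → X → ℝ)} (hcpt : IsCompact 𝒯) (A : Set X) :
    ScottContinuous (lowerHittingStep 𝒯 A) := by
  refine scottContinuous_iff_map_sSup.2 fun {d} hd hdir ↦ ?_
  have : Nonempty d := hd.to_subtype
  have : IsDirectedOrder d := hdir.isDirectedOrder
  rw [sSup_eq_iSup', sSup_image']
  ext x
  rw [iSup_apply]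
  by_cases hx : x ∈ A
  · simp only [lowerHittingStep_of_mem, hx, iSup_const]
  · simp only [lowerHittingStep_of_notMem 𝒯 _ hx, ← ENNReal.add_iSup,
      ennrealLowerOp_iSup hcpt (Subtype.mono_coe (· ∈ d)), iSup_apply]

lemma hlowIter_eq_coe_iterate {𝒯 : Set (X → X → ℝ)} (hnonneg : ∀ T ∈ 𝒯, ∀ x y, 0 ≤ T x y)
    (hne : 𝒯.Nonempty) (A : Set X) (n : ℕ) :
    hlowIter 𝒯 A n = fun x ↦ ((lowerHittingStep 𝒯 A)^[n + 1] ⊥ x : EReal) := by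
  ext x
  induction n generalizing x with
  | zero =>
    by_cases hx : x ∈ A
    · simp [hlowIter, lowerHittingStep_of_mem, indE, hx]
    · simp [hlowIter, lowerHittingStep_of_notMem, indE, ennrealLowerOp_bot hne, hx]
  | succ n ih =>
    rw [Function.iterate_succ_apply', coe_lowerHittingStep hnonneg, ← funext ih, hlowIter]

lemma isCompact_of_isClosed_of_isTransMat {𝒯 : Set (X → X → ℝ)}
    (hmem : ∀ T ∈ 𝒯, IsTransMat T) (hcl : IsClosed 𝒯) : IsCompact 𝒯 := by
  refine isCompact_Icc.of_isClosed_subset (s := Set.Icc 0 1) hcl fun T hT ↦ ?_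
  obtain ⟨hnonneg, hsum⟩ := hmem T hT
  refine ⟨hnonneg, fun x y ↦ ?_⟩
  calc T x y ≤ ∑ z, T x z := Finset.single_le_sum (fun z _ ↦ hnonneg x z) (Finset.mem_univ y)
    _ = 1 := hsum x

end Development

theorem hlowStar_minimal_solution_general [Fintype X] {𝒯 : Set (X → X → ℝ)}
    (hnonneg : ∀ T ∈ 𝒯, ∀ x y, 0 ≤ T x y) (hne : 𝒯.Nonempty) (hcpt : IsCompact 𝒯) (A : Set X) :
    ∃ hlowStar : X → EReal,
      (∀ x, Tendsto (fun n => hlowIter 𝒯 A n x) atTop (𝓝 (hlowStar x))) ∧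
      (∀ x, hlowStar x = indE Aᶜ x + indE Aᶜ x * lowerOp 𝒯 hlowStar x) ∧
      ∀ g : X → EReal, (∀ x, 0 ≤ g x) →
        (∀ x, g x = indE Aᶜ x + indE Aᶜ x * lowerOp 𝒯 g x) →
        ∀ x, hlowStar x ≤ g x := by
  refine ⟨fun x ↦ (lowerHittingStep 𝒯 A).lfp x, fun x ↦ ?_, fun x ↦ ?_, fun g hg hgfix x ↦ ?_⟩
  · simp only [hlowIter_eq_coe_iterate hnonneg hne]
    have hlim := tendsto_iterate_bot_lfp _
      (scottContinuous_lowerHittingStep hcpt A).ωScottContinuous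
    exact (continuous_coe_ennreal_ereal.tendsto _).comp
      ((tendsto_pi_nhds.1 hlim x).comp (tendsto_add_atTop_nat 1))
  · rw [← coe_lowerHittingStep hnonneg, OrderHom.map_lfp]
  · lift g to X → ENNReal using hg
    have hfix : lowerHittingStep 𝒯 A g = g := by
      ext y
      rw [← EReal.coe_ennreal_eq_coe_ennreal_iff, coe_lowerHittingStep hnonneg, ← hgfix]
    exact EReal.coe_ennreal_le_coe_ennreal_iff.2 (OrderHom.lfp_le_fixed _ hfix x)

/-- The pointwise limit of the lower hitting-time iterates is the minimal nonnegative
solution of the lower hitting-time system. -/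
theorem hlowStar_minimal_solution [Fintype X] [Nonempty X]
    (𝒯 : Set (X → X → ℝ))
    (hmem : ∀ T ∈ 𝒯, IsTransMat T) (hne : 𝒯.Nonempty) (hcl : IsClosed 𝒯)
    (hcv : Convex ℝ 𝒯) (hsep : HasSepRows 𝒯) (A : Set X) :
    ∃ hlowStar : X → EReal,
      (∀ x, Tendsto (fun n => hlowIter 𝒯 A n x) atTop (𝓝 (hlowStar x))) ∧
      (∀ x, hlowStar x = indE Aᶜ x + indE Aᶜ x * lowerOp 𝒯 hlowStar x) ∧
      ∀ g : X → EReal, (∀ x, 0 ≤ g x) →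
        (∀ x, g x = indE Aᶜ x + indE Aᶜ x * lowerOp 𝒯 g x) →
        ∀ x, hlowStar x ≤ g x :=
  hlowStar_minimal_solution_general (fun T hT ↦ (hmem T hT).1) hne
    (isCompact_of_isClosed_of_isTransMat hmem hcl) A
end

section
/- The pointwise limit hup* := lim_{n→∞} hup^n (which exists in [0,+∞] since the sequence is nondecreasing) is the minimal nonnegative solution of the upper hitting-time system: hup* satisfies hup* = 1_{A^c} + 1_{A^c}·(U hup*), and every function g : X → [0,+∞] satisfying g = 1_{A^c} + 1_{A^c}·(U g) dominates hup* pointwise. -/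
open Filter Topology

variable {X : Type*}

/-!
The map `f ↦ 1_{Aᶜ} + 1_{Aᶜ} · U f` preserves suprema of increasing sequences: addition and
multiplication by a nonnegative real do so on `[-∞, +∞]`, and so does a supremum over `𝒯` of maps
with this property. It also lies above `1_{Aᶜ}` on nonnegative functions, so Kleene iteration from
`1_{Aᶜ}` increases to a fixed point, which lies below every nonnegative prefixed point.
-/

open OmegaCompletePartialOrder fixedPoints

section ERealSuprema

variable {ι : Type*} [Preorder ι] [Nonempty ι] [IsDirectedOrder ι]

-- This needs no sign condition, since `⊥ + ⊤ = ⊥` in `EReal`.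
theorem ereal_iSup_add_iSup_of_monotone {u v : ι → EReal} (hu : Monotone u)
    (hv : Monotone v) : (⨆ n, u n) + ⨆ n, v n = ⨆ n, (u n + v n) := by
  refine le_antisymm ?_ EReal.iSup_add_le_add_iSup
  calc (⨆ n, u n) + ⨆ n, v n
      = liminf u atTop + liminf v atTop := by
        rw [(tendsto_atTop_iSup hu).liminf_eq, (tendsto_atTop_iSup hv).liminf_eq]
    _ ≤ liminf (fun n ↦ u n + v n) atTop := EReal.le_liminf_add
    _ = ⨆ n, (u n + v n) := (tendsto_atTop_iSup (hu.add hv)).liminf_eq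

theorem ereal_const_mul_iSup_of_monotone {c : EReal} (hc : 0 ≤ c) (hc' : c ≠ ⊤)
    {u : ι → EReal} (hu : Monotone u) : c * ⨆ n, u n = ⨆ n, c * u n := by
  have hcu : Monotone fun n ↦ c * u n := fun _ _ h ↦ mul_le_mul_of_nonneg_left (hu h) hc
  rw [← (tendsto_atTop_iSup hu).liminf_eq, ← EReal.liminf_const_mul_of_nonneg_of_ne_top hc hc',
    (tendsto_atTop_iSup hcu).liminf_eq]

end ERealSuprema

section ERealScottContinuity

variable {α : Type*} [OmegaCompletePartialOrder α] {f g : α → EReal}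

theorem ωScottContinuous_ereal_add (hf : ωScottContinuous f) (hg : ωScottContinuous g) :
    ωScottContinuous fun a ↦ f a + g a := by
  refine .of_monotone_map_ωSup ⟨hf.monotone.add hg.monotone, fun c ↦ ?_⟩
  rw [hf.map_ωSup, hg.map_ωSup]
  exact ereal_iSup_add_iSup_of_monotone (hf.monotone.comp c.monotone) (hg.monotone.comp c.monotone)

theorem ωScottContinuous_ereal_const_mul {c : EReal} (hc : 0 ≤ c) (hc' : c ≠ ⊤)
    (hf : ωScottContinuous f) : ωScottContinuous fun a ↦ c * f a := by
  refine .of_monotone_map_ωSup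
    ⟨fun _ _ h ↦ mul_le_mul_of_nonneg_left (hf.monotone h) hc, fun d ↦ ?_⟩
  rw [hf.map_ωSup]
  exact ereal_const_mul_iSup_of_monotone hc hc' (hf.monotone.comp d.monotone)

theorem ωScottContinuous_ereal_finsetSum {ι : Type*} (s : Finset ι) {f : ι → α → EReal}
    (hf : ∀ i ∈ s, ωScottContinuous (f i)) : ωScottContinuous fun a ↦ ∑ i ∈ s, f i a := by
  classical
  induction s using Finset.induction_on with
  | empty => simp
  | insert i s hi ih =>
    simp only [Finset.sum_insert hi]
    exact ωScottContinuous_ereal_add (hf i (s.mem_insert_self i))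
      (ih fun j hj ↦ hf j (Finset.mem_insert_of_mem hj))

end ERealScottContinuity

theorem indE_nonneg (B : Set X) (x : X) : 0 ≤ indE B x :=
  Set.indicator_nonneg (fun _ _ ↦ zero_le_one) x

theorem indE_ne_top (B : Set X) (x : X) : indE B x ≠ ⊤ := by
  by_cases hx : x ∈ B
  · simpa [indE, hx] using EReal.coe_ne_top 1
  · simp [indE, hx]

section TransitionOperators

variable [Fintype X] {𝒯 : Set (X → X → ℝ)} {f : X → EReal}

theorem matApply_nonneg {T : X → X → ℝ} {x : X} (hT : ∀ y, 0 ≤ T x y) (hf : 0 ≤ f) :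
    0 ≤ matApply T f x :=
  Finset.sum_nonneg fun y _ ↦ mul_nonneg (EReal.coe_nonneg.2 (hT y)) (hf y)

theorem ωScottContinuous_matApply {T : X → X → ℝ} (hT : ∀ x y, 0 ≤ T x y) :
    ωScottContinuous (matApply T) :=
  .of_apply₂ fun x ↦ ωScottContinuous_ereal_finsetSum _ fun y _ ↦
    ωScottContinuous_ereal_const_mul (EReal.coe_nonneg.2 (hT x y)) (EReal.coe_ne_top _) (.apply y)

theorem upperOp_nonneg (hnonneg : ∀ T ∈ 𝒯, ∀ x y, 0 ≤ T x y) (hne : 𝒯.Nonempty) (hf : 0 ≤ f) :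
    0 ≤ upperOp 𝒯 f := by
  obtain ⟨T, hT⟩ := hne
  exact fun x ↦ le_iSup₂_of_le T hT (matApply_nonneg (hnonneg T hT x) hf)

theorem ωScottContinuous_upperOp (hnonneg : ∀ T ∈ 𝒯, ∀ x y, 0 ≤ T x y) :
    ωScottContinuous (upperOp 𝒯) := by
  refine .of_apply₂ fun x ↦ ?_
  have hrow : (upperOp 𝒯 · x) = ⨆ T ∈ 𝒯, (matApply T · x) := by
    ext
    simp only [upperOp, iSup_apply]
  rw [hrow]
  exact CompleteLattice.ωScottContinuous.iSup fun T ↦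
    CompleteLattice.ωScottContinuous.iSup fun hT ↦
      (ωScottContinuous_matApply (hnonneg T hT)).apply₂ x

end TransitionOperators

section HittingTimes

variable [Fintype X] {𝒯 : Set (X → X → ℝ)}

/-- The right-hand side `1_{Aᶜ} + 1_{Aᶜ} · U f` of the upper hitting-time system, as an operator
on extended-real-valued functions; the system says that `f` is a fixed point. -/
noncomputable def hupStep (𝒯 : Set (X → X → ℝ)) (A : Set X) (f : X → EReal) : X → EReal :=
  fun x ↦ indE Aᶜ x + indE Aᶜ x * upperOp 𝒯 f x

theorem ωScottContinuous_hupStep (hnonneg : ∀ T ∈ 𝒯, ∀ x y, 0 ≤ T x y) (A : Set X) :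
    ωScottContinuous (hupStep 𝒯 A) :=
  .of_apply₂ fun x ↦ ωScottContinuous_ereal_add .const <|
    ωScottContinuous_ereal_const_mul (indE_nonneg _ x) (indE_ne_top _ x)
      ((ωScottContinuous_upperOp hnonneg).apply₂ x)

theorem indE_compl_le_hupStep (hnonneg : ∀ T ∈ 𝒯, ∀ x y, 0 ≤ T x y) (hne : 𝒯.Nonempty) (A : Set X)
    {f : X → EReal} (hf : 0 ≤ f) : indE Aᶜ ≤ hupStep 𝒯 A f :=
  fun x ↦ le_add_of_nonneg_right (mul_nonneg (indE_nonneg _ x) (upperOp_nonneg hnonneg hne hf x))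

theorem hupIter_eq_iterate (𝒯 : Set (X → X → ℝ)) (A : Set X) (n : ℕ) :
    hupIter 𝒯 A n = (hupStep 𝒯 A)^[n] (indE Aᶜ) := by
  induction n with
  | zero => rfl
  | succ n ih => rw [Function.iterate_succ_apply', ← ih]; rfl

end HittingTimes

theorem hupStar_minimal_solution_general [Fintype X] (𝒯 : Set (X → X → ℝ))
    (hnonneg : ∀ T ∈ 𝒯, ∀ x y, 0 ≤ T x y) (hne : 𝒯.Nonempty) (A : Set X) :
    ∃ hupStar : X → EReal,
      (∀ x, Tendsto (fun n ↦ hupIter 𝒯 A n x) atTop (𝓝 (hupStar x))) ∧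
      (∀ x, hupStar x = indE Aᶜ x + indE Aᶜ x * upperOp 𝒯 hupStar x) ∧
      ∀ g : X → EReal, (∀ x, 0 ≤ g x) →
        (∀ x, indE Aᶜ x + indE Aᶜ x * upperOp 𝒯 g x ≤ g x) →
        ∀ x, hupStar x ≤ g x := by
  let F : (X → EReal) →𝒄 (X → EReal) := .ofFun (hupStep 𝒯 A) (ωScottContinuous_hupStep hnonneg A)
  have hstart : indE Aᶜ ≤ F (indE Aᶜ) := indE_compl_le_hupStep hnonneg hne A (indE_nonneg _)
  have hiter (n : ℕ) : iterateChain F (indE Aᶜ) hstart n = hupIter 𝒯 A n :=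
    (hupIter_eq_iterate 𝒯 A n).symm
  refine ⟨ωSup (iterateChain F (indE Aᶜ) hstart), fun x ↦ ?_, fun x ↦ ?_, fun g hg0 hg ↦ ?_⟩
  · simp only [← hiter]
    have hmono : Monotone (iterateChain F (indE Aᶜ) hstart) := OrderHom.monotone _
    exact tendsto_atTop_iSup fun _ _ h ↦ hmono h x
  · exact congrFun (ωSup_iterate_mem_fixedPoint F (indE Aᶜ) hstart).symm x
  · exact ωSup_iterate_le_prefixedPoint F _ hstart hg
      ((indE_compl_le_hupStep hnonneg hne A hg0).trans hg)

/-- The pointwise limit of the upper hitting-time iterates is the minimal nonnegative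
solution of the upper hitting-time system. -/
theorem hupStar_minimal_solution [Fintype X] [Nonempty X]
    (𝒯 : Set (X → X → ℝ))
    (hmem : ∀ T ∈ 𝒯, IsTransMat T) (hne : 𝒯.Nonempty) (hcl : IsClosed 𝒯)
    (hcv : Convex ℝ 𝒯) (hsep : HasSepRows 𝒯) (A : Set X) :
    ∃ hupStar : X → EReal,
      (∀ x, Tendsto (fun n => hupIter 𝒯 A n x) atTop (𝓝 (hupStar x))) ∧
      (∀ x, hupStar x = indE Aᶜ x + indE Aᶜ x * upperOp 𝒯 hupStar x) ∧
      ∀ g : X → EReal, (∀ x, 0 ≤ g x) →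
        (∀ x, g x = indE Aᶜ x + indE Aᶜ x * upperOp 𝒯 g x) →
        ∀ x, hupStar x ≤ g x := by
  obtain ⟨h, hlim, hfix, hmin⟩ :=
    hupStar_minimal_solution_general 𝒯 (fun T hT ↦ (hmem T hT).1) hne A
  exact ⟨h, hlim, hfix, fun g hg0 hg ↦ hmin g hg0 fun x ↦ (hg x).ge⟩
end

section
/- The sequence (plow^n)_{n≥0} is pointwise nondecreasing with values in [0,1], so its pointwise limit plow* := lim_{n→∞} plow^n exists as a function X → [0,1]; moreover plow* is the minimal nonnegative solution of the lower hitting-probability system: plow* satisfies plow* = 1_A + 1_{A^c}·(L plow*), and every nonnegative function p : X → ℝ satisfying p = 1_A + 1_{A^c}·(L p) dominates plow* pointwise. -/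
open Filter Topology

variable {X : Type*}

/-- The `{0,1}`-indicator of a set `B ⊆ X`, as a real-valued function. -/
noncomputable def indR (B : Set X) : X → ℝ := fun x => Set.indicator B 1 x

/-- The restriction of the lower transition operator to real-valued functions
(on which it is real-valued). -/
noncomputable def lowerOpR [Fintype X] (𝒯 : Set (X → X → ℝ)) (f : X → ℝ) (x : X) : ℝ :=
  (lowerOp 𝒯 (fun y => (f y : EReal)) x).toReal

/-- The restriction of the upper transition operator to real-valued functions
(on which it is real-valued). -/
noncomputable def upperOpR [Fintype X] (𝒯 : Set (X → X → ℝ)) (f : X → ℝ) (x : X) : ℝ :=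
  (upperOp 𝒯 (fun y => (f y : EReal)) x).toReal

/-- The lower hitting-probability iterates: `plow⁰ = 1_A`,
`plowⁿ⁺¹ = 1_A + 1_{Aᶜ} · (L plowⁿ)`. -/
noncomputable def plowIter [Fintype X] (𝒯 : Set (X → X → ℝ)) (A : Set X) : ℕ → X → ℝ
  | 0 => indR A
  | n + 1 => fun x => indR A x + indR Aᶜ x * lowerOpR 𝒯 (plowIter 𝒯 A n) x

/-- The upper hitting-probability iterates: `pup⁰ = 1_A`,
`pupⁿ⁺¹ = 1_A + 1_{Aᶜ} · (U pupⁿ)`. -/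
noncomputable def pupIter [Fintype X] (𝒯 : Set (X → X → ℝ)) (A : Set X) : ℕ → X → ℝ
  | 0 => indR A
  | n + 1 => fun x => indR A x + indR Aᶜ x * upperOpR 𝒯 (pupIter 𝒯 A n) x

/-! The operator `Φ p = 1_A + 1_{Aᶜ} · (L p)` is monotone, and it is continuous because `L`, an
infimum of averages, is `1`-Lipschitz in the sup norm. The iterates of `Φ` from `1_A ≤ Φ 1_A`
therefore increase. If `p ≥ 0` and `Φ p ≤ p`, then `1_A ≤ Φ p ≤ p`, so they stay below `p`; taking
`p = 1 = Φ 1` shows that they converge. By continuity the limit is a fixed point of `Φ`, and it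
lies below every such `p`. -/

section Iteration

variable {α : Type*} [Preorder α] {φ : α → α} {a b : α}

theorem iterate_le_of_map_le (hφ : Monotone φ) (hab : a ≤ b) (hb : φ b ≤ b) (n : ℕ) :
    φ^[n] a ≤ b :=
  (hφ.iterate n hab).trans (hφ.antitone_iterate_of_map_le hb n.zero_le)

end Iteration

section Indicator

variable (B : Set X) (x : X)

theorem indR_nonneg : 0 ≤ indR B x :=
  Set.indicator_apply_nonneg fun _ => zero_le_one

theorem indR_add_indR_compl : indR B x + indR Bᶜ x = 1 :=
  Set.indicator_self_add_compl_apply B 1 x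

end Indicator

section TransitionOperators

variable [Fintype X] {T : X → X → ℝ} {𝒯 : Set (X → X → ℝ)} {f g : X → ℝ} {c : ℝ}

theorem IsTransMat.dotProduct_const (hT : IsTransMat T) (c : ℝ) (x : X) :
    T x ⬝ᵥ (fun _ => c) = c := by
  rw [dotProduct, ← Finset.sum_mul, hT.2 x, one_mul]

theorem IsTransMat.dotProduct_le_add (hT : IsTransMat T) (h : ∀ y, f y ≤ g y + c) (x : X) :
    T x ⬝ᵥ f ≤ T x ⬝ᵥ g + c :=
  calc
    T x ⬝ᵥ f ≤ T x ⬝ᵥ (g + fun _ => c) := dotProduct_le_dotProduct_of_nonneg_left h (hT.1 x)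
    _ = T x ⬝ᵥ g + c := by rw [dotProduct_add, hT.dotProduct_const]

theorem IsTransMat.neg_norm_le_dotProduct (hT : IsTransMat T) (f : X → ℝ) (x : X) :
    -‖f‖ ≤ T x ⬝ᵥ f := by
  have h : T x ⬝ᵥ 0 ≤ T x ⬝ᵥ f + ‖f‖ :=
    hT.dotProduct_le_add
      (fun y => neg_le_iff_add_nonneg.1 (neg_le_of_abs_le (norm_le_pi_norm f y))) x
  rwa [dotProduct_zero, ← neg_le_iff_add_nonneg] at h

theorem matApply_coe (T : X → X → ℝ) (f : X → ℝ) (x : X) :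
    matApply T (fun y => (f y : EReal)) x = ((T x ⬝ᵥ f : ℝ) : EReal) := by
  simp only [matApply, dotProduct, ← EReal.coe_mul]
  let coeHom : ℝ →+ EReal := ⟨⟨Real.toEReal, EReal.coe_zero⟩, EReal.coe_add⟩
  exact (map_sum coeHom (fun y => T x y * f y) Finset.univ).symm

theorem coe_lowerOpR (hmem : ∀ T ∈ 𝒯, IsTransMat T) (hne : 𝒯.Nonempty) (f : X → ℝ) (x : X) :
    (lowerOpR 𝒯 f x : EReal) = lowerOp 𝒯 (fun y => (f y : EReal)) x := by
  obtain ⟨T, hT⟩ := hne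
  have h_le : lowerOp 𝒯 (fun y => (f y : EReal)) x ≤ ((T x ⬝ᵥ f : ℝ) : EReal) :=
    (iInf₂_le T hT).trans_eq (matApply_coe T f x)
  have le_h : ((-‖f‖ : ℝ) : EReal) ≤ lowerOp 𝒯 (fun y => (f y : EReal)) x :=
    le_iInf₂ fun S hS => by
      rw [matApply_coe]
      exact EReal.coe_le_coe ((hmem S hS).neg_norm_le_dotProduct f x)
  exact EReal.coe_toReal (ne_top_of_le_ne_top (EReal.coe_ne_top _) h_le)
    (ne_bot_of_le_ne_bot (EReal.coe_ne_bot _) le_h)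

theorem isGLB_lowerOpR (hmem : ∀ T ∈ 𝒯, IsTransMat T) (hne : 𝒯.Nonempty) (f : X → ℝ) (x : X) :
    IsGLB ((fun T => T x ⬝ᵥ f) '' 𝒯) (lowerOpR 𝒯 f x) := by
  refine IsGLB.of_image EReal.coe_le_coe_iff ?_
  simp only [coe_lowerOpR hmem hne, lowerOp, matApply_coe, Set.image_image]
  exact isGLB_biInf

theorem lowerOpR_const (hmem : ∀ T ∈ 𝒯, IsTransMat T) (hne : 𝒯.Nonempty) (c : ℝ) (x : X) :
    lowerOpR 𝒯 (fun _ => c) x = c := by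
  have h := isGLB_lowerOpR hmem hne (fun _ => c) x
  rw [Set.image_congr fun T hT => (hmem T hT).dotProduct_const c x, hne.image_const] at h
  exact h.unique isGLB_singleton

theorem lowerOpR_le_add (hmem : ∀ T ∈ 𝒯, IsTransMat T) (hne : 𝒯.Nonempty)
    (h : ∀ y, f y ≤ g y + c) (x : X) : lowerOpR 𝒯 f x ≤ lowerOpR 𝒯 g x + c := by
  rw [← sub_le_iff_le_add]
  refine (isGLB_lowerOpR hmem hne g x).2 (Set.forall_mem_image.2 fun T hT => ?_)
  rw [sub_le_iff_le_add]
  exact ((isGLB_lowerOpR hmem hne f x).1 (Set.mem_image_of_mem _ hT)).trans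
    ((hmem T hT).dotProduct_le_add h x)

theorem monotone_lowerOpR (hmem : ∀ T ∈ 𝒯, IsTransMat T) (hne : 𝒯.Nonempty) :
    Monotone (lowerOpR 𝒯) := fun f g hfg x => by
  simpa only [add_zero] using
    lowerOpR_le_add hmem hne (fun y => (hfg y).trans_eq (add_zero (g y)).symm) x

theorem lowerOpR_nonneg (hmem : ∀ T ∈ 𝒯, IsTransMat T) (hne : 𝒯.Nonempty) (hf : 0 ≤ f) (x : X) :
    0 ≤ lowerOpR 𝒯 f x :=
  (lowerOpR_const hmem hne 0 x).ge.trans (monotone_lowerOpR hmem hne hf x)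

theorem lipschitzWith_lowerOpR_apply (hmem : ∀ T ∈ 𝒯, IsTransMat T) (hne : 𝒯.Nonempty) (x : X) :
    LipschitzWith 1 fun f => lowerOpR 𝒯 f x :=
  LipschitzWith.of_le_add fun f g => lowerOpR_le_add hmem hne
    (fun y => sub_le_iff_le_add'.1 ((le_abs_self _).trans (dist_le_pi_dist f g y))) x

theorem continuous_lowerOpR (hmem : ∀ T ∈ 𝒯, IsTransMat T) (hne : 𝒯.Nonempty) :
    Continuous (lowerOpR 𝒯) :=
  continuous_pi fun x => (lipschitzWith_lowerOpR_apply hmem hne x).continuous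

end TransitionOperators

section HittingProbabilities

variable [Fintype X] {𝒯 : Set (X → X → ℝ)} {A : Set X} {p : X → ℝ}

/-- The right-hand side `p ↦ 1_A + 1_{Aᶜ} · (L p)` of the lower hitting-probability system, whose
fixed points are the solutions of the system. -/
noncomputable def lowerHitOp (𝒯 : Set (X → X → ℝ)) (A : Set X) (p : X → ℝ) (x : X) : ℝ :=
  indR A x + indR Aᶜ x * lowerOpR 𝒯 p x

theorem plowIter_eq_iterate (𝒯 : Set (X → X → ℝ)) (A : Set X) (n : ℕ) :
    plowIter 𝒯 A n = (lowerHitOp 𝒯 A)^[n] (indR A) := by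
  induction n with
  | zero => rfl
  | succ n ih => rw [Function.iterate_succ_apply', ← ih]; rfl

theorem monotone_lowerHitOp (hmem : ∀ T ∈ 𝒯, IsTransMat T) (hne : 𝒯.Nonempty) (A : Set X) :
    Monotone (lowerHitOp 𝒯 A) := fun _ _ hpq x =>
  add_le_add_right
    (mul_le_mul_of_nonneg_left (monotone_lowerOpR hmem hne hpq x) (indR_nonneg Aᶜ x)) _

theorem continuous_lowerHitOp (hmem : ∀ T ∈ 𝒯, IsTransMat T) (hne : 𝒯.Nonempty) (A : Set X) :
    Continuous (lowerHitOp 𝒯 A) :=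
  continuous_const.add (continuous_const.mul (continuous_lowerOpR hmem hne))

theorem indR_le_lowerHitOp (hmem : ∀ T ∈ 𝒯, IsTransMat T) (hne : 𝒯.Nonempty) (hp : 0 ≤ p) :
    indR A ≤ lowerHitOp 𝒯 A p := fun x =>
  le_add_of_nonneg_right (mul_nonneg (indR_nonneg Aᶜ x) (lowerOpR_nonneg hmem hne hp x))

theorem lowerHitOp_one (hmem : ∀ T ∈ 𝒯, IsTransMat T) (hne : 𝒯.Nonempty) (A : Set X) :
    lowerHitOp 𝒯 A 1 = 1 := funext fun x => by
  rw [lowerHitOp, Pi.one_def, lowerOpR_const hmem hne, mul_one, indR_add_indR_compl]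

theorem monotone_plowIter (hmem : ∀ T ∈ 𝒯, IsTransMat T) (hne : 𝒯.Nonempty) (A : Set X) :
    Monotone (plowIter 𝒯 A) := by
  rw [funext (plowIter_eq_iterate 𝒯 A)]
  exact (monotone_lowerHitOp hmem hne A).monotone_iterate_of_le_map
    (indR_le_lowerHitOp hmem hne (indR_nonneg A))

theorem plowIter_le_of_lowerHitOp_le (hmem : ∀ T ∈ 𝒯, IsTransMat T) (hne : 𝒯.Nonempty)
    (hp : 0 ≤ p) (h : lowerHitOp 𝒯 A p ≤ p) (n : ℕ) : plowIter 𝒯 A n ≤ p := by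
  rw [plowIter_eq_iterate]
  exact iterate_le_of_map_le (monotone_lowerHitOp hmem hne A)
    ((indR_le_lowerHitOp hmem hne hp).trans h) h n

theorem plowIter_mem_Icc (hmem : ∀ T ∈ 𝒯, IsTransMat T) (hne : 𝒯.Nonempty) (A : Set X) (n : ℕ) :
    plowIter 𝒯 A n ∈ Set.Icc 0 1 :=
  ⟨le_trans (indR_nonneg A) (monotone_plowIter hmem hne A n.zero_le),
    plowIter_le_of_lowerHitOp_le hmem hne zero_le_one (lowerHitOp_one hmem hne A).le n⟩

theorem isFixedPt_lowerHitOp_of_tendsto_plowIter (hmem : ∀ T ∈ 𝒯, IsTransMat T)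
    (hne : 𝒯.Nonempty) (h : Tendsto (plowIter 𝒯 A) atTop (𝓝 p)) :
    Function.IsFixedPt (lowerHitOp 𝒯 A) p := by
  rw [funext (plowIter_eq_iterate 𝒯 A)] at h
  exact isFixedPt_of_tendsto_iterate h (continuous_lowerHitOp hmem hne A).continuousAt

end HittingProbabilities

theorem plowStar_minimal_solution_general [Fintype X] (𝒯 : Set (X → X → ℝ))
    (hmem : ∀ T ∈ 𝒯, IsTransMat T) (hne : 𝒯.Nonempty) (A : Set X) :
    (∀ x, Monotone fun n => plowIter 𝒯 A n x) ∧
    (∀ n x, plowIter 𝒯 A n x ∈ Set.Icc (0 : ℝ) 1) ∧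
    ∃ plowStar : X → ℝ,
      (∀ x, Tendsto (fun n => plowIter 𝒯 A n x) atTop (𝓝 (plowStar x))) ∧
      (∀ x, plowStar x ∈ Set.Icc (0 : ℝ) 1) ∧
      (∀ x, plowStar x = indR A x + indR Aᶜ x * lowerOpR 𝒯 plowStar x) ∧
      ∀ p : X → ℝ, (∀ x, 0 ≤ p x) →
        (∀ x, indR A x + indR Aᶜ x * lowerOpR 𝒯 p x ≤ p x) →
        ∀ x, plowStar x ≤ p x := by
  have hmono : Monotone (plowIter 𝒯 A) := monotone_plowIter hmem hne A
  have hIcc : ∀ n, plowIter 𝒯 A n ∈ Set.Icc 0 1 := plowIter_mem_Icc hmem hne A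
  have hbdd : BddAbove (Set.range (plowIter 𝒯 A)) :=
    ⟨1, Set.forall_mem_range.2 fun n => (hIcc n).2⟩
  have hlim := tendsto_atTop_ciSup hmono hbdd
  have hfix := isFixedPt_lowerHitOp_of_tendsto_plowIter hmem hne hlim
  have hlimIcc := isClosed_Icc.mem_of_tendsto hlim (Eventually.of_forall hIcc)
  exact ⟨fun x _ _ hmn => hmono hmn x, fun n x => ⟨(hIcc n).1 x, (hIcc n).2 x⟩,
    ⨆ n, plowIter 𝒯 A n, tendsto_pi_nhds.1 hlim, fun x => ⟨hlimIcc.1 x, hlimIcc.2 x⟩,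
    fun x => (congrFun hfix x).symm,
    fun p hp hsup => ciSup_le (plowIter_le_of_lowerHitOp_le hmem hne hp hsup)⟩

/-- The lower hitting-probability iterates are pointwise nondecreasing with values in
`[0,1]`, so converge pointwise; their limit is the minimal nonnegative solution of the
lower hitting-probability system. -/
theorem plowStar_minimal_solution [Fintype X] [Nonempty X]
    (𝒯 : Set (X → X → ℝ))
    (hmem : ∀ T ∈ 𝒯, IsTransMat T) (hne : 𝒯.Nonempty) (hcl : IsClosed 𝒯)
    (hcv : Convex ℝ 𝒯) (hsep : HasSepRows 𝒯) (A : Set X) :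
    (∀ x, Monotone fun n => plowIter 𝒯 A n x) ∧
    (∀ n x, plowIter 𝒯 A n x ∈ Set.Icc (0 : ℝ) 1) ∧
    ∃ plowStar : X → ℝ,
      (∀ x, Tendsto (fun n => plowIter 𝒯 A n x) atTop (𝓝 (plowStar x))) ∧
      (∀ x, plowStar x ∈ Set.Icc (0 : ℝ) 1) ∧
      (∀ x, plowStar x = indR A x + indR Aᶜ x * lowerOpR 𝒯 plowStar x) ∧
      ∀ p : X → ℝ, (∀ x, 0 ≤ p x) →
        (∀ x, p x = indR A x + indR Aᶜ x * lowerOpR 𝒯 p x) →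
        ∀ x, plowStar x ≤ p x := by
  obtain ⟨hmono, hIcc, q, hlim, hq, hfix, hmin⟩ := plowStar_minimal_solution_general 𝒯 hmem hne A
  exact ⟨hmono, hIcc, q, hlim, hq, hfix, fun p hp h => hmin p hp fun x => (h x).ge⟩
end
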